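/- For every ε > 0 there exists η(ε) > 0 such that for every φ ∈ 𝓑 with ‖φ‖_𝓑 < η(ε) and every t with 0 < t < 1, one has |i''_φ(t) − i''_φ(0)| ≤ ε ‖φ‖²_𝓗. -/

import Mathlib

/-!
Write `A = |∂v₀|²`, `E = ρ⁻⁴ e^{-2v₀}`, `P = E |∂Y₀|²`, `Q = E ∂Y₀·∂y`, `R = E |∂y|²`. The density of
`i_φ(t)` is `A + 2t ∂v₀·∂α + t² |∂α|² + e^{-2tα} (P + 2tQ + t²R)`, and differentiating twice under
the integral sign gives the density
`2 |∂α|² + e^{-2tα} (4α² (P + 2tQ + t²R) - 8α (Q + tR) + 2R)`. In the difference between its values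
at `t` and at `0` the term `2 |∂α|²` cancels. Since `‖φ‖_𝓑 = N` bounds `|α|` pointwise and
`2 |αQ| ≤ α²P + R`, the rest is at most `120 N (α²P + R)` (`pointwise_diff_bound`).

It remains to compare `α²P + R` with the density of `‖φ‖²_𝓗`. The explicit Kerr data satisfy
`X₀ ≥ sin²θ (r + √|J|)² / 2` (`X0_lower`) and `|∂Y₀| = O(sin²θ / r)` (`gradSq_Y0_le`). As
`E = X₀⁻²`, this yields `E ≤ 4 ρ⁻⁴` (`weight_le`) and `P ≤ 4608 r⁻²` (`energy_Y0_le`), so that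
`α²P + R ≤ 4608 α² r⁻² + 4 ρ⁻⁴ |∂y|²`. The condition `β < -1/2` makes the two densities on the right,
and `|∂α|²`, integrable (`integrable_domFn`).

Finiteness of the unperturbed energy `∫ (A + P)` plays no role: if it failed, the energy would be
infinite for every `t`, the integrals would all take the conventional value `0`, and the inequality
would be trivial (`abstract_bound`).
-/

open Real MeasureTheory

noncomputable section

/-- Partial derivative with respect to ρ (the first coordinate) of an
axisymmetric function, viewed as a function of (ρ, z). -/
def pdR (f : ℝ × ℝ → ℝ) (p : ℝ × ℝ) : ℝ := fderiv ℝ f p (1, 0)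

/-- Partial derivative with respect to z (the second coordinate). -/
def pdZ (f : ℝ × ℝ → ℝ) (p : ℝ × ℝ) : ℝ := fderiv ℝ f p (0, 1)

/-- |∂f|² = f_{,ρ}² + f_{,z}². -/
def gradSq (f : ℝ × ℝ → ℝ) (p : ℝ × ℝ) : ℝ := (pdR f p) ^ 2 + (pdZ f p) ^ 2

/-- ∂f·∂g = f_{,ρ} g_{,ρ} + f_{,z} g_{,z}. -/
def gradDot (f g : ℝ × ℝ → ℝ) (p : ℝ × ℝ) : ℝ :=
  pdR f p * pdR g p + pdZ f p * pdZ g p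

/-- The flat Laplacian of ℝ³ acting on axisymmetric functions:
Δf = f_{,ρρ} + ρ⁻¹ f_{,ρ} + f_{,zz}. -/
def lap (f : ℝ × ℝ → ℝ) (p : ℝ × ℝ) : ℝ :=
  pdR (pdR f) p + (p.1)⁻¹ * pdR f p + pdZ (pdZ f) p

/-- The flat divergence of ℝ³ of an axisymmetric vector field (Wρ, Wz):
div W = ρ⁻¹ (ρ Wρ)_{,ρ} + Wz_{,z} = Wρ_{,ρ} + ρ⁻¹ Wρ + Wz_{,z}. -/
def divg (Wr Wz : ℝ × ℝ → ℝ) (p : ℝ × ℝ) : ℝ :=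
  pdR Wr p + (p.1)⁻¹ * Wr p + pdZ Wz p

/-- The half-plane {ρ > 0} of (ρ, z), representing ℝ³ in cylindrical coordinates. -/
def HP : Set (ℝ × ℝ) := {p | 0 < p.1}

/-- Ω_{ρ₀} = {ρ > ρ₀}, the exterior of the solid cylinder of radius ρ₀. -/
def Om (ρ₀ : ℝ) : Set (ℝ × ℝ) := {p | ρ₀ < p.1}

/-- ∫_{ℝ³} h dμ for an axisymmetric integrand h, where dμ = ρ dρ dz dφ. -/
def intR3 (h : ℝ × ℝ → ℝ) : ℝ := (2 * π) * ∫ p in HP, h p * p.1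

/-- ∫_{Ω_{ρ₀}} h dμ for an axisymmetric integrand h. -/
def intOm (ρ₀ : ℝ) (h : ℝ × ℝ → ℝ) : ℝ := (2 * π) * ∫ p in Om ρ₀, h p * p.1

/-- The mass functional M(v, Y) = (1/(32π)) ∫_{ℝ³} (|∂v|² + ρ⁻⁴ e^{−2v} |∂Y|²) dμ. -/
def MF (v Y : ℝ × ℝ → ℝ) : ℝ :=
  (1 / (32 * π)) *
    intR3 (fun p => gradSq v p + (p.1 ^ 4)⁻¹ * Real.exp (-2 * v p) * gradSq Y p)

/-- r = √(ρ² + z²). -/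
def rr (p : ℝ × ℝ) : ℝ := Real.sqrt (p.1 ^ 2 + p.2 ^ 2)

/-- cos θ = z / r. -/
def cosT (p : ℝ × ℝ) : ℝ := p.2 / rr p

/-- sin²θ = ρ² / r². -/
def sin2T (p : ℝ × ℝ) : ℝ := p.1 ^ 2 / (rr p) ^ 2

/-- r̃ = r + √|J|. -/
def rt (J : ℝ) (p : ℝ × ℝ) : ℝ := rr p + Real.sqrt |J|

/-- Σ = r̃² + |J| cos²θ. -/
def Sg (J : ℝ) (p : ℝ × ℝ) : ℝ := (rt J p) ^ 2 + |J| * (cosT p) ^ 2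

/-- The extreme Kerr potential Y₀. -/
def Y0 (J : ℝ) (p : ℝ × ℝ) : ℝ :=
  2 * J * ((cosT p) ^ 3 - 3 * cosT p) - 2 * J ^ 2 * cosT p * (sin2T p) ^ 2 / Sg J p

/-- The extreme Kerr Killing norm X₀. -/
def X0 (J : ℝ) (p : ℝ × ℝ) : ℝ :=
  (((rt J p) ^ 2 + |J|) ^ 2 - (rr p) ^ 2 * |J| * sin2T p) * sin2T p / Sg J p

/-- The extreme Kerr function v₀ = ln X₀ − 2 ln ρ, so that X₀ = ρ² e^{v₀}. -/
def v0 (J : ℝ) (p : ℝ × ℝ) : ℝ := Real.log (X0 J p) - 2 * Real.log p.1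

/-- σ = √(r² + 1). -/
def sgm (p : ℝ × ℝ) : ℝ := Real.sqrt ((rr p) ^ 2 + 1)

/-- The pointwise weighted C¹ quantity σ^{−β}|f| + σ^{−β+1}|∂f|. -/
def wFn (β : ℝ) (f : ℝ × ℝ → ℝ) (p : ℝ × ℝ) : ℝ :=
  sgm p ^ (-β) * |f p| + sgm p ^ (-β + 1) * Real.sqrt (gradSq f p)

/-- The weighted norm ‖f‖_{C¹_β(Ω)} = sup_Ω (σ^{−β}|f| + σ^{−β+1}|∂f|). -/
def C1norm (β : ℝ) (Ω : Set (ℝ × ℝ)) (f : ℝ × ℝ → ℝ) : ℝ :=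
  sSup (wFn β f '' Ω)

/-- The Banach space 𝓑: pairs φ = (α, y) of axisymmetric C¹ functions with
y ≡ 0 on {ρ ≤ ρ₀} and finite norm ‖φ‖_𝓑 = ‖α‖_{C¹_β(ℝ³)} + ‖y‖_{C¹_β(Ω_{ρ₀})}. -/
structure Bsp (ρ₀ β : ℝ) where
  a : ℝ × ℝ → ℝ
  y : ℝ × ℝ → ℝ
  ha : ContDiff ℝ 1 a
  hy : ContDiff ℝ 1 y
  hy0 : ∀ p : ℝ × ℝ, p.1 ≤ ρ₀ → y p = 0
  hba : BddAbove (wFn β a '' HP)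
  hby : BddAbove (wFn β y '' Om ρ₀)

/-- The norm of 𝓑. -/
def Bnorm (ρ₀ β : ℝ) (φ : Bsp ρ₀ β) : ℝ :=
  C1norm β HP φ.a + C1norm β (Om ρ₀) φ.y

/-- i_φ(t) = M(u₀ + tφ) = M(v₀ + tα, Y₀ + ty). -/
def iF (J ρ₀ β : ℝ) (φ : Bsp ρ₀ β) (t : ℝ) : ℝ :=
  MF (fun p => v0 J p + t * φ.a p) (fun p => Y0 J p + t * φ.y p)

/-- ‖α‖²_{H₁} = ∫_{ℝ³} |∂α|² dμ + ∫_{ℝ³} α² r⁻² dμ. -/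
def H1sq (a : ℝ × ℝ → ℝ) : ℝ :=
  intR3 (fun p => gradSq a p) + intR3 (fun p => (a p) ^ 2 * ((rr p) ^ 2)⁻¹)

/-- ‖y‖²_{H₂} = ∫_{Ω_{ρ₀}} |∂y|² ρ⁻⁴ dμ + ∫_{Ω_{ρ₀}} y² ρ⁻⁶ dμ. -/
def H2sq (ρ₀ : ℝ) (y : ℝ × ℝ → ℝ) : ℝ :=
  intOm ρ₀ (fun p => gradSq y p * (p.1 ^ 4)⁻¹) +
    intOm ρ₀ (fun p => (y p) ^ 2 * (p.1 ^ 6)⁻¹)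

/-- ‖φ‖²_𝓗 = ‖α‖²_{H₁} + ‖y‖²_{H₂}. -/
def Hsq (ρ₀ β : ℝ) (φ : Bsp ρ₀ β) : ℝ := H1sq φ.a + H2sq ρ₀ φ.y

/-! ### Integrals of a quadratic-exponential family in a parameter -/

lemma integrable_exp_mul {X : Type*} [MeasurableSpace X] {μ : Measure X} {α : X → ℝ} {N : ℝ}
    (hαm : Measurable α) (hα : ∀ᵐ x ∂μ, |α x| ≤ N) (s : ℝ) {f : X → ℝ} (hf : Integrable f μ) :
    Integrable (fun x => Real.exp (-2 * s * α x) * f x) μ := by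
  refine hf.bdd_mul (c := Real.exp (2 * |s| * N)) (by fun_prop) ?_
  filter_upwards [hα] with x hx
  rw [Real.norm_eq_abs, Real.abs_exp]
  apply Real.exp_le_exp.2
  have h1 : -2 * s * α x ≤ |(-2) * s * α x| := le_abs_self _
  rw [abs_mul, abs_mul] at h1
  norm_num at h1
  have := mul_le_mul_of_nonneg_left hx (by positivity : (0 : ℝ) ≤ 2 * |s|)
  linarith

/-- Differentiation in `s` of `∫ (A₀ + s A₁ + s² A₂ + e^{-2sα} (P₀ + s P₁ + s² P₂))`. The derivative
is an integral of the same form, so the lemma can be applied to it again. -/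
lemma hasDerivAt_expInt {X : Type*} [MeasurableSpace X] {μ : Measure X} {A0 A1 A2 P0 P1 P2 α : X → ℝ}
    {N : ℝ} (hαm : Measurable α) (hα : ∀ᵐ x ∂μ, |α x| ≤ N)
    (hA0 : Integrable A0 μ) (hA1 : Integrable A1 μ) (hA2 : Integrable A2 μ)
    (hP0 : Integrable P0 μ) (hP1 : Integrable P1 μ) (hP2 : Integrable P2 μ) (t : ℝ) :
    HasDerivAt (fun s : ℝ => ∫ x, (A0 x + s * A1 x + s ^ 2 * A2 x
        + Real.exp (-2 * s * α x) * (P0 x + s * P1 x + s ^ 2 * P2 x)) ∂μ)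
      (∫ x, (A1 x + t * (2 * A2 x) + t ^ 2 * 0
        + Real.exp (-2 * t * α x) * ((P1 x - 2 * (α x * P0 x))
          + t * (2 * P2 x - 2 * (α x * P1 x)) + t ^ 2 * (-2 * (α x * P2 x)))) ∂μ) t := by
  have hexp : ∀ s : ℝ, ∀ {f : X → ℝ}, Integrable f μ →
      Integrable (fun x => Real.exp (-2 * s * α x) * f x) μ := by
    intro s f hf
    exact integrable_exp_mul hαm hα s hf
  have hmul : ∀ {f : X → ℝ}, Integrable f μ → Integrable (fun x => α x * f x) μ := by
    intro f hf
    refine hf.bdd_mul (c := N) (by fun_prop) ?_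
    filter_upwards [hα] with x hx
    simpa using hx
  set T : ℝ := |t| + 1 with hT
  have hball : ∀ s ∈ Metric.ball t 1, |s| ≤ T := by
    intro s hs
    rw [Metric.mem_ball, Real.dist_eq] at hs
    have := abs_sub_abs_le_abs_sub s t
    linarith
  refine (hasDerivAt_integral_of_dominated_loc_of_deriv_le
    (s := Metric.ball t 1)
    (F' := fun s x => A1 x + s * (2 * A2 x) + s ^ 2 * 0
        + Real.exp (-2 * s * α x) * ((P1 x - 2 * (α x * P0 x))
          + s * (2 * P2 x - 2 * (α x * P1 x)) + s ^ 2 * (-2 * (α x * P2 x))))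
    (bound := fun x => |A1 x| + T * (2 * |A2 x|) + Real.exp (2 * T * N) *
      ((|P1 x| + 2 * |α x * P0 x|) + T * (2 * |P2 x| + 2 * |α x * P1 x|)
        + T ^ 2 * (2 * |α x * P2 x|)))
    (Metric.ball_mem_nhds t one_pos) ?_ ?_ ?_ ?_ ?_ ?_).2
  · refine Filter.Eventually.of_forall fun s => ?_
    exact (((hA0.add (hA1.const_mul s)).add (hA2.const_mul (s ^ 2))).add
      (hexp s ((hP0.add (hP1.const_mul s)).add (hP2.const_mul (s ^ 2))))).1
  · exact ((hA0.add (hA1.const_mul t)).add (hA2.const_mul (t ^ 2))).add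
      (hexp t ((hP0.add (hP1.const_mul t)).add (hP2.const_mul (t ^ 2))))
  · exact (((hA1.add ((hA2.const_mul 2).const_mul t)).add
      ((integrable_zero X ℝ μ).const_mul (t ^ 2))).add
      (hexp t (((hP1.sub ((hmul hP0).const_mul 2)).add
        (((hP2.const_mul 2).sub ((hmul hP1).const_mul 2)).const_mul t)).add
          (((hmul hP2).const_mul (-2)).const_mul (t ^ 2))))).1
  · filter_upwards [hα] with x hx s hs
    have hs' := hball s hs
    have hT0 : 0 ≤ T := by positivity
    have hN0 : 0 ≤ N := (abs_nonneg _).trans hx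
    have he : Real.exp (-2 * s * α x) ≤ Real.exp (2 * T * N) := by
      apply Real.exp_le_exp.2
      have h1 : -2 * s * α x ≤ |(-2) * s * α x| := le_abs_self _
      rw [abs_mul, abs_mul] at h1
      norm_num at h1
      have := mul_le_mul hs' hx (abs_nonneg _) hT0
      linarith
    have hs2 : |s| ^ 2 ≤ T ^ 2 := by gcongr
    rw [Real.norm_eq_abs]
    have e1 : |s * (2 * A2 x)| ≤ T * (2 * |A2 x|) := by
      rw [abs_mul, abs_mul, abs_two]; gcongr
    have e2 : |P1 x - 2 * (α x * P0 x)| ≤ |P1 x| + 2 * |α x * P0 x| := by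
      refine (abs_sub _ _).trans ?_
      rw [abs_mul 2, abs_two]
    have e3 : |s * (2 * P2 x - 2 * (α x * P1 x))| ≤ T * (2 * |P2 x| + 2 * |α x * P1 x|) := by
      rw [abs_mul]
      refine mul_le_mul hs' ((abs_sub _ _).trans ?_) (abs_nonneg _) hT0
      rw [abs_mul 2, abs_mul 2, abs_two]
    have e4 : |s ^ 2 * (-2 * (α x * P2 x))| ≤ T ^ 2 * (2 * |α x * P2 x|) := by
      rw [abs_mul, abs_mul (-2), abs_neg, abs_two, abs_pow]; gcongr
    refine (abs_add_le _ _).trans (add_le_add ?_ ?_)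
    · rw [mul_zero, add_zero]
      exact (abs_add_le _ _).trans (add_le_add le_rfl e1)
    · rw [abs_mul, Real.abs_exp]
      refine mul_le_mul he ?_ (abs_nonneg _) (Real.exp_pos _).le
      exact (abs_add_le _ _).trans (add_le_add ((abs_add_le _ _).trans (add_le_add e2 e3)) e4)
  · exact (hA1.abs.add ((hA2.abs.const_mul 2).const_mul T)).add
      ((((hP1.abs.add ((hmul hP0).abs.const_mul 2)).add
        (((hP2.abs.const_mul 2).add ((hmul hP1).abs.const_mul 2)).const_mul T)).add
          (((hmul hP2).abs.const_mul 2).const_mul (T ^ 2))).const_mul _)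
  · refine Filter.Eventually.of_forall fun x s _ => ?_
    have hid := hasDerivAt_id' s
    have h2 := hasDerivAt_pow 2 s
    have hE := ((hid.const_mul (-2)).mul_const (α x)).exp
    have hl := ((hid.mul_const (A1 x)).const_add (A0 x)).add (h2.mul_const (A2 x))
    have hp := ((hid.mul_const (P1 x)).const_add (P0 x)).add (h2.mul_const (P2 x))
    refine (hl.add (hE.mul hp)).congr_deriv ?_
    simp
    ring

/-- The variation of the second derivative of `e^{-2ta} (P + 2tQ + t²R)`, pointwise: it is small
relative to `a² P + R`, the mixed term `aQ` being absorbed by Cauchy–Schwarz. -/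
lemma pointwise_diff_bound {P Q R a t N : ℝ} (hP : 0 ≤ P) (hR : 0 ≤ R) (hQ : Q ^ 2 ≤ P * R)
    (ha : |a| ≤ N) (hN : N ≤ 1 / 2) (ht0 : 0 ≤ t) (ht1 : t ≤ 1) :
    |Real.exp (-2 * t * a) * (4 * a ^ 2 * (P + 2 * t * Q + t ^ 2 * R) - 8 * a * (Q + t * R) + 2 * R)
      - (4 * a ^ 2 * P - 8 * a * Q + 2 * R)| ≤ 120 * N * (a ^ 2 * P + R) := by
  have hN0 : 0 ≤ N := (abs_nonneg _).trans ha
  set S := a ^ 2 * P + R with hS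
  have hPa : 0 ≤ a ^ 2 * P := by positivity
  have hS0 : 0 ≤ S := by positivity
  have hRS : R ≤ S := by linarith
  have haQ : 2 * |a * Q| ≤ S := by
    have h1 : (2 * (a * Q)) ^ 2 ≤ S ^ 2 := by
      nlinarith [mul_le_mul_of_nonneg_left hQ (sq_nonneg a), sq_nonneg (a ^ 2 * P - R)]
    have := abs_le_of_sq_le_sq h1 hS0
    rw [abs_mul, abs_two] at this
    exact this
  have ha1 : |a| ≤ 1 / 2 := ha.trans hN
  have hta : |t * a| ≤ N := by
    rw [abs_mul, abs_of_nonneg ht0]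
    nlinarith [abs_nonneg a]
  have he : |Real.exp (-2 * t * a) - 1| ≤ 4 * N := by
    have h1 : |(-2) * t * a| = 2 * |t * a| := by
      rw [mul_assoc, abs_mul, abs_neg, abs_two]
    have := Real.abs_exp_sub_one_le (x := -2 * t * a) (by rw [h1]; linarith)
    rw [h1] at this
    linarith
  have htR : |t * R| ≤ R := by
    rw [abs_mul, abs_of_nonneg ht0, abs_of_nonneg hR]; nlinarith
  have ht2R : |t ^ 2 * R| ≤ R := by
    rw [abs_mul, abs_of_nonneg (sq_nonneg t), abs_of_nonneg hR]
    exact mul_le_of_le_one_left hR (pow_le_one₀ ht0 ht1)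
  have haaQ : |a * (t * (a * Q))| ≤ N * (S / 2) := by
    rw [abs_mul]
    refine mul_le_mul ha ?_ (abs_nonneg _) hN0
    rw [abs_mul, abs_of_nonneg ht0]
    nlinarith [abs_nonneg (a * Q)]
  have haaR : |a * (a * (t ^ 2 * R))| ≤ N * (S / 2) := by
    rw [abs_mul]
    refine mul_le_mul ha ?_ (abs_nonneg _) hN0
    rw [abs_mul]
    nlinarith [abs_nonneg a, abs_nonneg (t ^ 2 * R)]
  have haR : |a * (t * R)| ≤ N * S := by
    rw [abs_mul]
    exact mul_le_mul ha (htR.trans hRS) (abs_nonneg _) hN0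
  have hNS : N * S ≤ S / 2 := by nlinarith
  have hb : |4 * a ^ 2 * (P + 2 * t * Q + t ^ 2 * R) - 8 * a * (Q + t * R) + 2 * R| ≤ 26 * S := by
    rw [abs_le] at *
    constructor <;> nlinarith [le_abs_self (a * Q), neg_abs_le (a * Q)]
  have hc : |8 * (a * (t * (a * Q))) + 4 * (a * (a * (t ^ 2 * R))) - 8 * (a * (t * R))|
      ≤ 16 * (N * S) := by
    rw [abs_le] at *
    constructor <;> linarith
  have hid : Real.exp (-2 * t * a) *
        (4 * a ^ 2 * (P + 2 * t * Q + t ^ 2 * R) - 8 * a * (Q + t * R) + 2 * R)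
      - (4 * a ^ 2 * P - 8 * a * Q + 2 * R)
      = (Real.exp (-2 * t * a) - 1) *
        (4 * a ^ 2 * (P + 2 * t * Q + t ^ 2 * R) - 8 * a * (Q + t * R) + 2 * R)
      + (8 * (a * (t * (a * Q))) + 4 * (a * (a * (t ^ 2 * R))) - 8 * (a * (t * R))) := by ring
  rw [hid]
  refine (abs_add_le _ _).trans ?_
  rw [abs_mul]
  have := mul_le_mul he hb (abs_nonneg _) (by positivity)
  linarith

/-- A nonnegative quadratic polynomial `|a + tb|²` controls `|a|²` up to a multiple of `|b|²`. -/
lemma quad_lower {A B C t : ℝ} (hA : 0 ≤ A) (hC : 0 ≤ C) (hB : B ^ 2 ≤ A * C) :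
    0 ≤ A + 2 * t * B + t ^ 2 * C ∧ A ≤ 2 * (A + 2 * t * B + t ^ 2 * C) + 2 * (t ^ 2 * C) := by
  have key : ∀ s : ℝ, -(2 * s * B) ≤ A + s ^ 2 * C := by
    intro s
    have h0 : 0 ≤ A + s ^ 2 * C := by positivity
    refine (neg_le_abs _).trans ?_
    refine abs_le_of_sq_le_sq ?_ h0
    nlinarith [mul_le_mul_of_nonneg_left hB (sq_nonneg s), sq_nonneg (A - s ^ 2 * C)]
  constructor
  · linarith [key t]
  · have := key (2 * t)
    nlinarith

/-- The variation of the second derivative of the energy `G`, with `A = |∂v₀|²`, `C = |∂α|²`,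
`P` and `R` the weighted `|∂Y₀|²` and `|∂y|²`, and `B`, `Q` the corresponding mixed terms.
No integrability of `A` or `P` is needed: if `A + P` is not integrable then the integrand is
non-integrable for every `t`, and `G` is identically `0` by the convention for the integral. -/
lemma abstract_bound {X : Type*} [MeasurableSpace X] {μ : Measure X} {A B C P Q R α S : X → ℝ}
    {N : ℝ} (hN0 : 0 ≤ N) (hN : N ≤ 1 / 2) (hαm : Measurable α) (hα : ∀ᵐ x ∂μ, |α x| ≤ N)
    (hAm : Measurable A) (hBm : Measurable B) (hPm : Measurable P) (hQm : Measurable Q)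
    (hA : ∀ᵐ x ∂μ, 0 ≤ A x) (hC : ∀ᵐ x ∂μ, 0 ≤ C x) (hP : ∀ᵐ x ∂μ, 0 ≤ P x)
    (hR : ∀ᵐ x ∂μ, 0 ≤ R x) (hB : ∀ᵐ x ∂μ, B x ^ 2 ≤ A x * C x)
    (hQ : ∀ᵐ x ∂μ, Q x ^ 2 ≤ P x * R x)
    (hCi : Integrable C μ) (hRi : Integrable R μ) (hSi : Integrable S μ)
    (hS : ∀ᵐ x ∂μ, α x ^ 2 * P x + R x ≤ S x) {G : ℝ → ℝ}
    (hG : ∀ t, G t = ∫ x, (A x + 2 * t * B x + t ^ 2 * C x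
        + Real.exp (-2 * t * α x) * (P x + 2 * t * Q x + t ^ 2 * R x)) ∂μ)
    {t : ℝ} (ht0 : 0 < t) (ht1 : t < 1) :
    |deriv (deriv G) t - deriv (deriv G) 0| ≤ 120 * N * ∫ x, S x ∂μ := by
  by_cases hI : Integrable (fun x => A x + P x) μ
  · have hAi : Integrable A μ := by
      refine hI.mono' hAm.aestronglyMeasurable ?_
      filter_upwards [hA, hP] with x h1 h2
      rw [Real.norm_eq_abs, abs_of_nonneg h1]; linarith
    have hPi : Integrable P μ := by
      refine hI.mono' hPm.aestronglyMeasurable ?_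
      filter_upwards [hA, hP] with x h1 h2
      rw [Real.norm_eq_abs, abs_of_nonneg h2]; linarith
    have hBi : Integrable B μ := by
      refine (hAi.add hCi).mono' hBm.aestronglyMeasurable ?_
      filter_upwards [hA, hC, hB] with x h1 h2 h3
      have h0 : 0 ≤ A x + C x := by positivity
      rw [Real.norm_eq_abs, Pi.add_apply]
      exact abs_le_of_sq_le_sq (by nlinarith) h0
    have hQi : Integrable Q μ := by
      refine (hPi.add hRi).mono' hQm.aestronglyMeasurable ?_
      filter_upwards [hP, hR, hQ] with x h1 h2 h3
      have h0 : 0 ≤ P x + R x := by positivity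
      rw [Real.norm_eq_abs, Pi.add_apply]
      exact abs_le_of_sq_le_sq (by nlinarith) h0
    have hmul : ∀ {f : X → ℝ}, Integrable f μ → Integrable (fun x => α x * f x) μ := by
      intro f hf
      refine hf.bdd_mul (c := N) (by fun_prop) ?_
      filter_upwards [hα] with x hx
      simpa using hx
    have d1 := fun s => hasDerivAt_expInt hαm hα hAi (hBi.const_mul 2) hCi hPi
      (hQi.const_mul 2) hRi s
    have d2 := fun s => hasDerivAt_expInt hαm hα (hBi.const_mul 2) (hCi.const_mul 2)
      (integrable_zero X ℝ μ) ((hQi.const_mul 2).sub ((hmul hPi).const_mul 2))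
      ((hRi.const_mul 2).sub ((hmul (hQi.const_mul 2)).const_mul 2))
      ((hmul hRi).const_mul (-2)) s
    have hGe : G = fun s => ∫ x, (A x + s * (2 * B x) + s ^ 2 * C x
        + Real.exp (-2 * s * α x) * (P x + s * (2 * Q x) + s ^ 2 * R x)) ∂μ := by
      refine funext fun s => (hG s).trans ?_
      congr 1; ext x
      ring
    rw [← hGe] at d1
    set H : ℝ → X → ℝ := fun s x => 2 * C x + Real.exp (-2 * s * α x) *
      (4 * α x ^ 2 * (P x + 2 * s * Q x + s ^ 2 * R x) - 8 * α x * (Q x + s * R x) + 2 * R x)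
      with hH
    have hG2 : ∀ s, deriv (deriv G) s = ∫ x, H s x ∂μ := by
      intro s
      rw [(funext fun r => (d1 r).deriv : deriv G = _)]
      refine (d2 s).deriv.trans ?_
      congr 1; ext x
      simp only [hH, Pi.zero_apply, Pi.sub_apply]
      ring
    have hexp : ∀ s : ℝ, ∀ {f : X → ℝ}, Integrable f μ →
        Integrable (fun x => Real.exp (-2 * s * α x) * f x) μ := by
      intro s f hf
      exact integrable_exp_mul hαm hα s hf
    have hHi : ∀ s, Integrable (H s) μ := by
      intro s
      refine ((hCi.const_mul 2).add (hexp s (((((hmul (hmul hPi)).const_mul 4).add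
        ((hmul (hmul hQi)).const_mul (8 * s))).add ((hmul (hmul hRi)).const_mul (4 * s ^ 2))).sub
        (((hmul hQi).const_mul 8).add ((hmul hRi).const_mul (8 * s))) |>.add
        (hRi.const_mul 2)))).congr (Filter.Eventually.of_forall fun x => ?_)
      simp only [hH, Pi.add_apply, Pi.sub_apply]
      ring
    rw [hG2, hG2, ← integral_sub (hHi t) (hHi 0), ← integral_const_mul, ← Real.norm_eq_abs]
    refine norm_integral_le_of_norm_le (hSi.const_mul _) ?_
    filter_upwards [hα, hP, hR, hQ, hS] with x hx h1 h2 h3 h4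
    have hb := pointwise_diff_bound h1 h2 h3 hx hN ht0.le ht1.le
    refine le_trans (le_of_eq ?_) (hb.trans (mul_le_mul_of_nonneg_left h4 (by positivity)))
    rw [Real.norm_eq_abs]
    congr 1
    simp [hH]
  · have hG0 : G = fun _ => 0 := by
      funext s
      rw [hG s]
      refine integral_undef fun hF => hI ?_
      refine ((hF.const_mul (2 * Real.exp (2 * |s| * N))).add
        ((hCi.add hRi).const_mul (2 * s ^ 2))).mono' (by fun_prop) ?_
      filter_upwards [hα, hA, hC, hP, hR, hB, hQ] with x hx h1 h2 h3 h4 h5 h6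
      obtain ⟨a1, a2⟩ := quad_lower (t := s) h1 h2 h5
      obtain ⟨b1, b2⟩ := quad_lower (t := s) h3 h4 h6
      rw [Real.norm_eq_abs, abs_of_nonneg (by positivity)]
      simp only [Pi.add_apply]
      set U := A x + 2 * s * B x + s ^ 2 * C x
      set V := P x + 2 * s * Q x + s ^ 2 * R x
      set M := Real.exp (2 * |s| * N)
      have hM : 1 ≤ M := Real.one_le_exp (by positivity)
      have hMe : 1 ≤ M * Real.exp (-2 * s * α x) := by
        rw [← Real.exp_add]
        apply Real.one_le_exp
        have h1 : 2 * s * α x ≤ |2 * s * α x| := le_abs_self _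
        rw [abs_mul, abs_mul, abs_two] at h1
        have := mul_le_mul_of_nonneg_left hx (by positivity : (0 : ℝ) ≤ 2 * |s|)
        linarith
      have c1 : U ≤ M * U := le_mul_of_one_le_left a1 hM
      have c2 : V ≤ M * Real.exp (-2 * s * α x) * V := le_mul_of_one_le_left b1 hMe
      nlinarith
    have hS0 : 0 ≤ N * ∫ x, S x ∂μ := by
      refine mul_nonneg hN0 (integral_nonneg_of_ae ?_)
      filter_upwards [hP, hR, hS] with x h1 h2 h3
      exact (by positivity : 0 ≤ α x ^ 2 * P x + R x).trans h3
    rw [hG0]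
    simpa [mul_assoc] using hS0

/-! ### The extreme Kerr data -/

lemma rr_pos {p : ℝ × ℝ} (hp : p ∈ HP) : 0 < rr p := by
  have h : 0 < p.1 := hp
  exact Real.sqrt_pos.2 (by positivity)

lemma rr_sq (p : ℝ × ℝ) : rr p ^ 2 = p.1 ^ 2 + p.2 ^ 2 := Real.sq_sqrt (by positivity)

lemma sin2T_eq {p : ℝ × ℝ} (hp : p ∈ HP) : sin2T p = 1 - cosT p ^ 2 := by
  have h := (rr_pos hp).ne'
  have h2 := rr_sq p
  rw [sin2T, cosT]
  field_simp
  linarith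

lemma sin2T_pos {p : ℝ × ℝ} (hp : p ∈ HP) : 0 < sin2T p := by
  have h := rr_pos hp
  have h' : 0 < p.1 := hp
  rw [sin2T]; positivity

lemma Sg_pos {J : ℝ} {p : ℝ × ℝ} (hp : p ∈ HP) : 0 < Sg J p := by
  have h := rr_pos hp
  have : 0 < rt J p := by rw [rt]; positivity
  rw [Sg]; positivity

/-- The pointwise bound `sin²θ (r + √|J|)² / 2 ≤ X₀`. -/
lemma X0_lower {J : ℝ} {p : ℝ × ℝ} (hp : p ∈ HP) :
    sin2T p * (rt J p) ^ 2 / 2 ≤ X0 J p := by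
  have hr := rr_pos hp
  have hw := sin2T_pos hp
  have hS := Sg_pos (J := J) hp
  have hwe := sin2T_eq hp
  have hc : cosT p ^ 2 ≤ 1 := by linarith
  have hw1 : sin2T p ≤ 1 := by nlinarith [sq_nonneg (cosT p)]
  have hm : 0 ≤ Real.sqrt |J| := Real.sqrt_nonneg _
  have hJ : |J| = Real.sqrt |J| ^ 2 := (Real.sq_sqrt (abs_nonneg J)).symm
  have hrt : rr p ≤ rt J p := by rw [rt]; linarith
  have hrt2 : rr p ^ 2 ≤ rt J p ^ 2 := by gcongr
  have hJrt : |J| ≤ rt J p ^ 2 := by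
    rw [hJ]; gcongr; rw [rt]; linarith
  rw [X0, le_div_iff₀ hS]
  have hJ0 := abs_nonneg J
  have hSg : Sg J p ≤ 2 * rt J p ^ 2 := by rw [Sg]; nlinarith
  have h1 : rr p ^ 2 * |J| * sin2T p ≤ rt J p ^ 2 * |J| := by
    calc rr p ^ 2 * |J| * sin2T p ≤ rr p ^ 2 * |J| * 1 := by gcongr
      _ ≤ rt J p ^ 2 * |J| := by rw [mul_one]; gcongr
  have h2 : rt J p ^ 2 * rt J p ^ 2 ≤ (rt J p ^ 2 + |J|) ^ 2 - rr p ^ 2 * |J| * sin2T p := by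
    nlinarith [mul_nonneg (sq_nonneg (rt J p)) hJ0]
  calc sin2T p * rt J p ^ 2 / 2 * Sg J p ≤ sin2T p * rt J p ^ 2 / 2 * (2 * rt J p ^ 2) := by gcongr
    _ = (rt J p ^ 2 * rt J p ^ 2) * sin2T p := by ring
    _ ≤ _ := by gcongr

lemma X0_pos {J : ℝ} {p : ℝ × ℝ} (hp : p ∈ HP) : 0 < X0 J p := by
  refine lt_of_lt_of_le ?_ (X0_lower hp)
  have h := rr_pos hp
  have hw := sin2T_pos hp
  have : 0 < rt J p := by rw [rt]; positivity
  positivity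

/-- `ρ⁻⁴ e^{-2v₀} = X₀⁻²`. -/
lemma weight_eq {J : ℝ} {p : ℝ × ℝ} (hp : p ∈ HP) :
    (p.1 ^ 4)⁻¹ * Real.exp (-2 * v0 J p) = (X0 J p ^ 2)⁻¹ := by
  have h' : 0 < p.1 := hp
  have hX := X0_pos (J := J) hp
  have h1 : Real.exp (v0 J p) = X0 J p / p.1 ^ 2 := by
    rw [v0, Real.exp_sub, Real.exp_log hX, two_mul, Real.exp_add, Real.exp_log h', sq]
  have h2 : -2 * v0 J p = -(v0 J p + v0 J p) := by ring
  rw [h2, Real.exp_neg, Real.exp_add, h1]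
  field_simp

/-- `e^{-2 v₀} ≤ 4`, stated for the weight of the functional. -/
lemma weight_le {J : ℝ} {p : ℝ × ℝ} (hp : p ∈ HP) :
    (p.1 ^ 4)⁻¹ * Real.exp (-2 * v0 J p) ≤ 4 * (p.1 ^ 4)⁻¹ := by
  have h' : 0 < p.1 := hp
  have hr := rr_pos hp
  rw [weight_eq hp]
  have h1 : p.1 ^ 2 / 2 ≤ X0 J p := by
    refine le_trans ?_ (X0_lower hp)
    have hrt : rr p ≤ rt J p := by rw [rt]; linarith [Real.sqrt_nonneg |J|]
    have : sin2T p * rr p ^ 2 = p.1 ^ 2 := by rw [sin2T]; field_simp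
    rw [← this]
    have hw := sin2T_pos hp
    gcongr
  have h2 : (X0 J p ^ 2)⁻¹ ≤ ((p.1 ^ 2 / 2) ^ 2)⁻¹ := by gcongr
  refine h2.trans (le_of_eq ?_)
  field_simp
  norm_num

/-- The potential `Y₀` along a curve `s ↦ (r(s), cos θ(s))`: its derivative vanishes like `sin²θ`
at the axis and is `O(1/r)` when `r' = O(1)` and `(cos θ)' = O(1/r)`. -/
lemma Y0_curve {J : ℝ} (hJ : J ≠ 0) {r c : ℝ → ℝ} {r' c' x : ℝ} (hr : HasDerivAt r r' x)
    (hc : HasDerivAt c c' x) (hr0 : 0 < r x) (hc1 : c x ^ 2 ≤ 1) (hr' : |r'| ≤ 1)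
    (hc' : |c'| ≤ 1 / r x) :
    ∃ D, HasDerivAt (fun s => 2 * J * (c s ^ 3 - 3 * c s) - 2 * J ^ 2 * c s * (1 - c s ^ 2) ^ 2 /
        ((r s + Real.sqrt |J|) ^ 2 + |J| * c s ^ 2)) D x ∧
      |D| ≤ 24 * |J| * ((1 - c x ^ 2) / r x) := by
  have hm : 0 < Real.sqrt |J| := Real.sqrt_pos.2 (abs_pos.2 hJ)
  have hJm : |J| = Real.sqrt |J| ^ 2 := (Real.sq_sqrt (abs_nonneg J)).symm
  have hJJ : J ^ 2 = |J| ^ 2 := (sq_abs J).symm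
  have hJ0 : 0 < |J| := abs_pos.2 hJ
  set m := Real.sqrt |J|
  have hS : 0 < (r x + m) ^ 2 + |J| * c x ^ 2 := by positivity
  have hnum := ((hc.const_mul (2 * J ^ 2)).mul ((hc.pow 2).const_sub 1 |>.pow 2))
  have hden := ((hr.add_const m).pow 2).add ((hc.pow 2).const_mul |J|)
  have hall := (((hc.pow 3).sub (hc.const_mul 3)).const_mul (2 * J)).sub (hnum.div hden hS.ne')
  refine ⟨_, hall, ?_⟩
  simp only [Pi.pow_apply, Pi.add_apply, Pi.mul_apply]
  set w := 1 - c x ^ 2 with hw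
  have hw0 : 0 ≤ w := by linarith
  have hw1 : w ≤ 1 := by nlinarith [sq_nonneg (c x)]
  set T := (r x + m) ^ 2 + |J| * c x ^ 2 with hT
  have hcabs : |c x| ≤ 1 := (sq_le_one_iff_abs_le_one _).1 hc1
  -- A factor `w = sin²θ` comes out of the derivative; each remaining term is `O(1/r)` because
  -- `T` dominates both `|J|` and `r (r + √|J|)`.
  have e : ∀ D, D = w * (-6 * J * c' - 2 * J ^ 2 * ((w - 4 * c x ^ 2) * c' / T
      - (c x * w) * (2 * (r x + m) * r' / T ^ 2)
      - (c x ^ 2 * w) * (2 * |J| * c' / T ^ 2))) → |D| ≤ 24 * |J| * (w / r x) := by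
    intro D hD
    rw [hD, abs_mul, abs_of_nonneg hw0]
    have hT1 : |J| ≤ T := by
      rw [hT, hJm]; nlinarith [mul_nonneg hJ0.le (sq_nonneg (c x))]
    have hT2 : (r x + m) * r x ≤ T := by
      rw [hT]; nlinarith [mul_nonneg hJ0.le (sq_nonneg (c x))]
    have b1 : |(-6) * J * c'| ≤ 6 * |J| * (1 / r x) := by
      rw [abs_mul, abs_mul, abs_neg]
      norm_num only [abs_of_pos]
      gcongr
    have b2 : |(w - 4 * c x ^ 2) * c' / T| ≤ 5 * (1 / r x) / |J| := by
      rw [abs_div, abs_mul, abs_of_pos hS]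
      have : |w - 4 * c x ^ 2| ≤ 5 := by rw [abs_le]; constructor <;> nlinarith [sq_nonneg (c x)]
      gcongr
    have hcw : |c x * w| ≤ 1 := by
      rw [abs_mul, abs_of_nonneg hw0]; nlinarith [abs_nonneg (c x)]
    have hccw : |c x ^ 2 * w| ≤ 1 := by
      rw [abs_mul, abs_of_nonneg hw0, abs_pow, sq_abs]; nlinarith [sq_nonneg (c x)]
    have b3 : |(c x * w) * (2 * (r x + m) * r' / T ^ 2)| ≤ 2 * (1 / r x) / |J| := by
      rw [abs_mul]
      have : |2 * (r x + m) * r' / T ^ 2| ≤ 2 * (1 / r x) / |J| := by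
        have hrm : 0 < r x + m := by positivity
        rw [abs_div, abs_mul, abs_of_pos (by positivity : 0 < 2 * (r x + m)),
          abs_of_pos (by positivity : 0 < T ^ 2)]
        calc 2 * (r x + m) * |r'| / T ^ 2 ≤ 2 * (r x + m) * 1 / (((r x + m) * r x) * |J|) := by
              rw [sq]; gcongr
          _ = 2 * (1 / r x) / |J| := by field_simp
      calc _ ≤ 1 * (2 * (1 / r x) / |J|) := by gcongr
        _ = _ := one_mul _
    have b4 : |(c x ^ 2 * w) * (2 * |J| * c' / T ^ 2)| ≤ 2 * (1 / r x) / |J| := by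
      rw [abs_mul]
      have : |2 * |J| * c' / T ^ 2| ≤ 2 * (1 / r x) / |J| := by
        rw [abs_div, abs_mul, abs_of_pos (by positivity : 0 < 2 * |J|),
          abs_of_pos (by positivity : 0 < T ^ 2)]
        calc 2 * |J| * |c'| / T ^ 2 ≤ 2 * |J| * (1 / r x) / (|J| * |J|) := by
              rw [sq]; gcongr
          _ = 2 * (1 / r x) / |J| := by field_simp
      calc _ ≤ 1 * (2 * (1 / r x) / |J|) := by gcongr
        _ = _ := one_mul _
    have b5 : |2 * J ^ 2 * ((w - 4 * c x ^ 2) * c' / T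
      - (c x * w) * (2 * (r x + m) * r' / T ^ 2)
      - (c x ^ 2 * w) * (2 * |J| * c' / T ^ 2))| ≤ 2 * |J| ^ 2 * (9 * (1 / r x) / |J|) := by
      rw [abs_mul, hJJ, abs_of_pos (by positivity : 0 < 2 * |J| ^ 2)]
      gcongr
      refine (abs_sub _ _).trans ((add_le_add ((abs_sub _ _).trans (add_le_add b2 b3)) b4).trans
        (le_of_eq ?_))
      ring
    calc _ ≤ w * (6 * |J| * (1 / r x) + 2 * |J| ^ 2 * (9 * (1 / r x) / |J|)) := by
          gcongr
          exact (abs_sub _ _).trans (add_le_add b1 b5)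
      _ = _ := by field_simp; ring
  apply e
  have hS' := hS.ne'
  field_simp
  rw [hw]
  push_cast
  ring

lemma Y0_eq {J : ℝ} {p : ℝ × ℝ} (hp : p ∈ HP) :
    Y0 J p = 2 * J * (cosT p ^ 3 - 3 * cosT p) - 2 * J ^ 2 * cosT p * (1 - cosT p ^ 2) ^ 2 /
        ((rr p + Real.sqrt |J|) ^ 2 + |J| * cosT p ^ 2) := by
  rw [Y0, sin2T_eq hp, Sg, rt]

lemma differentiableAt_rr {p : ℝ × ℝ} (hp : p ∈ HP) : DifferentiableAt ℝ rr p := by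
  have h' : 0 < p.1 := hp
  unfold rr
  refine DifferentiableAt.sqrt (by fun_prop) (by positivity)

lemma differentiableAt_quot {f g : ℝ × ℝ → ℝ} {p : ℝ × ℝ} (hf : DifferentiableAt ℝ f p)
    (hg : DifferentiableAt ℝ g p) (h0 : g p ≠ 0) : DifferentiableAt ℝ (fun q => f q / g q) p := by
  simp only [div_eq_mul_inv]
  exact hf.mul (hg.inv h0)

lemma differentiableAt_cosT {p : ℝ × ℝ} (hp : p ∈ HP) : DifferentiableAt ℝ cosT p := by
  unfold cosT
  exact differentiableAt_quot differentiableAt_snd (differentiableAt_rr hp) (rr_pos hp).ne'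

lemma differentiableAt_sin2T {p : ℝ × ℝ} (hp : p ∈ HP) : DifferentiableAt ℝ sin2T p := by
  unfold sin2T
  exact differentiableAt_quot (differentiableAt_fst.pow 2) ((differentiableAt_rr hp).pow 2)
    (pow_ne_zero 2 (rr_pos hp).ne')

lemma differentiableAt_Sg {J : ℝ} {p : ℝ × ℝ} (hp : p ∈ HP) : DifferentiableAt ℝ (Sg J) p := by
  unfold Sg rt
  exact (((differentiableAt_rr hp).add_const _).pow 2).add
    (((differentiableAt_cosT hp).pow 2).const_mul _)

lemma differentiableAt_Y0 {J : ℝ} {p : ℝ × ℝ} (hp : p ∈ HP) : DifferentiableAt ℝ (Y0 J) p := by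
  have hc := differentiableAt_cosT hp
  unfold Y0
  exact (((hc.pow 3).sub (hc.const_mul 3)).const_mul (2 * J)).sub
    (differentiableAt_quot ((hc.const_mul (2 * J ^ 2)).mul ((differentiableAt_sin2T hp).pow 2))
      (differentiableAt_Sg hp) (Sg_pos hp).ne')

lemma differentiableAt_v0 {J : ℝ} {p : ℝ × ℝ} (hp : p ∈ HP) : DifferentiableAt ℝ (v0 J) p := by
  have h' : 0 < p.1 := hp
  have hr := differentiableAt_rr hp
  have hX : DifferentiableAt ℝ (X0 J) p := by
    unfold X0 rt
    exact differentiableAt_quot ((((((hr.add_const _).pow 2).add_const _).pow 2).sub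
      (((hr.pow 2).mul_const _).mul (differentiableAt_sin2T hp))).mul
      (differentiableAt_sin2T hp)) (differentiableAt_Sg hp) (Sg_pos hp).ne'
  unfold v0
  exact (hX.log (X0_pos hp).ne').sub ((differentiableAt_fst.log h'.ne').const_mul 2)

lemma hasDerivAt_pdR {f : ℝ × ℝ → ℝ} {p : ℝ × ℝ} (hf : DifferentiableAt ℝ f p) :
    HasDerivAt (fun s => f (s, p.2)) (pdR f p) p.1 :=
  hf.hasFDerivAt.comp_hasDerivAt p.1 ((hasDerivAt_id p.1).prodMk (hasDerivAt_const p.1 p.2))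

lemma hasDerivAt_pdZ {f : ℝ × ℝ → ℝ} {p : ℝ × ℝ} (hf : DifferentiableAt ℝ f p) :
    HasDerivAt (fun s => f (p.1, s)) (pdZ f p) p.2 :=
  hf.hasFDerivAt.comp_hasDerivAt p.2 ((hasDerivAt_const p.2 p.1).prodMk (hasDerivAt_id p.2))

/-- `∂_ρ r = ρ/r` and `∂_ρ cos θ = -ρz/r³`. -/
lemma hasDerivAt_polar_R {p : ℝ × ℝ} (hp : p ∈ HP) :
    HasDerivAt (fun s => rr (s, p.2)) (p.1 / rr p) p.1 ∧
    HasDerivAt (fun s => cosT (s, p.2)) (-(p.2 * p.1) / rr p ^ 3) p.1 := by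
  have h' : 0 < p.1 := hp
  have hr := rr_pos hp
  have h1 : HasDerivAt (fun s => rr (s, p.2)) (p.1 / rr p) p.1 := by
    have := ((hasDerivAt_pow 2 p.1).add_const (p.2 ^ 2)).sqrt (by positivity)
    refine this.congr_deriv ?_
    rw [rr]; push_cast; field_simp
  refine ⟨h1, ((hasDerivAt_const p.1 p.2).div h1 hr.ne').congr_deriv ?_⟩
  simp only [Prod.mk.eta]
  field_simp
  ring

/-- `∂_z r = z/r` and `∂_z cos θ = ρ²/r³`. -/
lemma hasDerivAt_polar_Z {p : ℝ × ℝ} (hp : p ∈ HP) :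
    HasDerivAt (fun s => rr (p.1, s)) (p.2 / rr p) p.2 ∧
    HasDerivAt (fun s => cosT (p.1, s)) (p.1 ^ 2 / rr p ^ 3) p.2 := by
  have h' : 0 < p.1 := hp
  have hr := rr_pos hp
  have h2 := rr_sq p
  have h1 : HasDerivAt (fun s => rr (p.1, s)) (p.2 / rr p) p.2 := by
    have := ((hasDerivAt_pow 2 p.2).const_add (p.1 ^ 2)).sqrt (by positivity)
    refine this.congr_deriv ?_
    rw [rr]; push_cast; field_simp
  refine ⟨h1, ((hasDerivAt_id' p.2).div h1 hr.ne').congr_deriv ?_⟩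
  simp only [Prod.mk.eta]
  field_simp
  linarith

/-- `∂Y₀ = O(sin²θ / r)`. -/
lemma gradSq_Y0_le {J : ℝ} (hJ : J ≠ 0) {p : ℝ × ℝ} (hp : p ∈ HP) :
    gradSq (Y0 J) p ≤ 2 * (24 * |J| * (sin2T p / rr p)) ^ 2 := by
  have h' : 0 < p.1 := hp
  have hr := rr_pos hp
  have h2 := rr_sq p
  have hr3 : rr p ^ 3 = rr p * rr p ^ 2 := by ring
  have hc1 : cosT p ^ 2 ≤ 1 := by linarith [sin2T_eq hp, sin2T_pos hp]
  have hρ : p.1 ≤ rr p := abs_le_of_sq_le_sq' (by nlinarith) hr.le |>.2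
  have hz : |p.2| ≤ rr p := abs_le_of_sq_le_sq (by nlinarith) hr.le
  have hopen : IsOpen HP := isOpen_lt continuous_const continuous_fst
  have hd := differentiableAt_Y0 (J := J) hp
  have hR : |pdR (Y0 J) p| ≤ 24 * |J| * (sin2T p / rr p) := by
    obtain ⟨k1, k2⟩ := hasDerivAt_polar_R hp
    obtain ⟨D, hD, hDb⟩ := Y0_curve hJ k1 k2 hr hc1
      (by rw [abs_div, abs_of_pos h', abs_of_pos hr]; exact (div_le_one hr).2 hρ)
      (by
        rw [abs_div, abs_neg, abs_mul, abs_of_pos h', abs_of_pos (by positivity : 0 < rr p ^ 3),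
          div_le_div_iff₀ (by positivity) hr, hr3, one_mul]
        have : |p.2| * p.1 ≤ rr p * rr p := by gcongr
        nlinarith)
    rw [(hasDerivAt_pdR hd).unique (hD.congr_of_eventuallyEq ?_), sin2T_eq hp]
    · exact hDb
    · filter_upwards [lt_mem_nhds h'] with s hs
      exact Y0_eq (p := (s, p.2)) hs
  have hZ : |pdZ (Y0 J) p| ≤ 24 * |J| * (sin2T p / rr p) := by
    obtain ⟨k1, k2⟩ := hasDerivAt_polar_Z hp
    obtain ⟨D, hD, hDb⟩ := Y0_curve hJ k1 k2 hr hc1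
      (by rw [abs_div, abs_of_pos hr]; exact (div_le_one hr).2 hz)
      (by
        rw [abs_of_pos (by positivity),
          div_le_div_iff₀ (by positivity) hr, hr3, one_mul, h2]
        nlinarith [mul_nonneg hr.le (sq_nonneg p.2)])
    rw [(hasDerivAt_pdZ hd).unique (hD.congr_of_eventuallyEq ?_), sin2T_eq hp]
    · exact hDb
    · exact Filter.Eventually.of_forall fun s => Y0_eq (p := (p.1, s)) hp
  have q1 := pow_le_pow_left₀ (abs_nonneg _) hR 2
  have q2 := pow_le_pow_left₀ (abs_nonneg _) hZ 2
  rw [sq_abs] at q1 q2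
  rw [gradSq]
  linarith

/-- The energy density of `Y₀` is controlled by the weight `r⁻²` of the `H₁` norm:
`ρ⁻⁴ e^{-2v₀} |∂Y₀|² = |∂Y₀|² / X₀² = O(r⁻²)`. -/
lemma energy_Y0_le {J : ℝ} (hJ : J ≠ 0) {p : ℝ × ℝ} (hp : p ∈ HP) :
    (p.1 ^ 4)⁻¹ * Real.exp (-2 * v0 J p) * gradSq (Y0 J) p ≤ 4608 * (rr p ^ 2)⁻¹ := by
  have hr := rr_pos hp
  have hw := sin2T_pos hp
  have hJ0 : 0 < |J| := abs_pos.2 hJ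
  have hX := X0_pos (J := J) hp
  have hXl : sin2T p * |J| / 2 ≤ X0 J p := by
    refine le_trans ?_ (X0_lower hp)
    have : |J| ≤ rt J p ^ 2 := by
      rw [rt]
      nlinarith [Real.sq_sqrt (abs_nonneg J), Real.sqrt_nonneg |J|]
    gcongr
  rw [weight_eq hp]
  calc (X0 J p ^ 2)⁻¹ * gradSq (Y0 J) p
      ≤ ((sin2T p * |J| / 2) ^ 2)⁻¹ * (2 * (24 * |J| * (sin2T p / rr p)) ^ 2) := by
        have h0 : 0 ≤ gradSq (Y0 J) p := by rw [gradSq]; positivity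
        gcongr
        exact gradSq_Y0_le hJ hp
    _ = _ := by field_simp; norm_num

/-! ### The weighted spaces: integrability and pointwise bounds -/

/-- An integrable majorant on the `(ρ, z)` plane (`‖p‖` is the sup norm) for every weighted density
in the argument; integrability at infinity is exactly `β < -1/2`. -/
def domFn (β : ℝ) (p : ℝ × ℝ) : ℝ := (1 + ‖p‖ ^ 2) ^ β * ‖p‖⁻¹

lemma integrable_domFn {β : ℝ} (hβ : β < -(1 / 2)) : Integrable (domFn β) := by
  have h := (integrable_fun_norm_addHaar (E := ℝ × ℝ) (F := ℝ) volume
    (f := fun y => (1 + y ^ 2) ^ β * y⁻¹)).2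
  refine h ?_
  have h2 : Module.finrank ℝ (ℝ × ℝ) = 2 := by simp
  have h1 := (integrable_rpow_neg_one_add_norm_sq (E := ℝ) (μ := volume) (r := -2 * β)
    (by simp; linarith)).integrableOn (s := Set.Ioi 0)
  refine h1.congr_fun (fun y hy => ?_) measurableSet_Ioi
  have hy' : y ≠ 0 := ne_of_gt hy
  rw [h2]
  have : -(-2 * β) / 2 = β := by ring
  simp only [this, Real.norm_eq_abs, sq_abs, smul_eq_mul]
  field_simp
  simp

lemma norm_le_rr (p : ℝ × ℝ) : ‖p‖ ≤ rr p := by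
  have h := rr_sq p
  have h0 : 0 ≤ rr p := Real.sqrt_nonneg _
  rw [Prod.norm_def, Real.norm_eq_abs, Real.norm_eq_abs]
  exact max_le (abs_le_of_sq_le_sq (by nlinarith [sq_nonneg p.2]) h0)
    (abs_le_of_sq_le_sq (by nlinarith [sq_nonneg p.1]) h0)

/-- `σ^{2β} / r` is at most `domFn β`. -/
lemma rpow_rr_le_domFn {β : ℝ} (hβ : β < -(1 / 2)) {p : ℝ × ℝ} (hp : p ∈ HP) :
    (rr p ^ 2 + 1) ^ β * (rr p)⁻¹ ≤ domFn β p := by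
  have h' : 0 < p.1 := hp
  have hn : 0 < ‖p‖ := norm_pos_iff.2 fun h => by simp [h] at h'
  have hle := norm_le_rr p
  have hr := rr_pos hp
  rw [domFn]
  have h1 : (rr p ^ 2 + 1) ^ β ≤ (1 + ‖p‖ ^ 2) ^ β := by
    refine Real.rpow_le_rpow_of_nonpos (by positivity) ?_ (by linarith)
    have := pow_le_pow_left₀ hn.le hle 2
    linarith
  gcongr

lemma gradSq_nonneg (f : ℝ × ℝ → ℝ) (p : ℝ × ℝ) : 0 ≤ gradSq f p := by
  rw [gradSq]; positivity

lemma wFn_nonneg (β : ℝ) (f : ℝ × ℝ → ℝ) (p : ℝ × ℝ) : 0 ≤ wFn β f p := by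
  have : 0 ≤ sgm p := Real.sqrt_nonneg _
  rw [wFn]; positivity

lemma C1norm_nonneg (β : ℝ) (Ω : Set (ℝ × ℝ)) (f : ℝ × ℝ → ℝ) : 0 ≤ C1norm β Ω f := by
  refine Real.sSup_nonneg ?_
  rintro _ ⟨p, _, rfl⟩
  exact wFn_nonneg β f p

/-- Pointwise content of the weighted norm: `f² ≤ N² σ^{2β}` and `|∂f|² ≤ N² σ^{2β-2}`. -/
lemma weighted_bounds {β N : ℝ} {Ω : Set (ℝ × ℝ)} {f : ℝ × ℝ → ℝ}
    (hb : BddAbove (wFn β f '' Ω)) (hN : C1norm β Ω f ≤ N) {p : ℝ × ℝ} (hp : p ∈ Ω) :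
    f p ^ 2 ≤ N ^ 2 * (rr p ^ 2 + 1) ^ β ∧ gradSq f p ≤ N ^ 2 * (rr p ^ 2 + 1) ^ (β - 1) := by
  have hw : wFn β f p ≤ N := (le_csSup hb ⟨p, hp, rfl⟩).trans hN
  have hs : 0 < sgm p := Real.sqrt_pos.2 (by positivity)
  have hs2 : sgm p ^ 2 = rr p ^ 2 + 1 := Real.sq_sqrt (by positivity)
  have hconv : ∀ γ : ℝ, (sgm p ^ γ) ^ 2 = (rr p ^ 2 + 1) ^ γ := by
    intro γ
    rw [← hs2, ← Real.rpow_natCast, ← Real.rpow_natCast, ← Real.rpow_mul hs.le,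
      ← Real.rpow_mul hs.le, mul_comm]
  have key : ∀ γ u : ℝ, 0 ≤ u → sgm p ^ (-γ) * u ≤ N → u ^ 2 ≤ N ^ 2 * (rr p ^ 2 + 1) ^ γ := by
    intro γ u hu h
    have hp' := Real.rpow_pos_of_pos hs γ
    rw [Real.rpow_neg hs.le, inv_mul_le_iff₀ hp'] at h
    have := pow_le_pow_left₀ hu h 2
    rwa [mul_pow, hconv, mul_comm] at this
  have h1 : 0 ≤ sgm p ^ (-β) * |f p| := by positivity
  have h2 : 0 ≤ sgm p ^ (-β + 1) * Real.sqrt (gradSq f p) := by positivity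
  rw [wFn] at hw
  constructor
  · rw [← sq_abs]
    exact key β _ (abs_nonneg _) (by linarith)
  · rw [← Real.sq_sqrt (gradSq_nonneg f p)]
    refine key (β - 1) _ (Real.sqrt_nonneg _) ?_
    rw [show -(β - 1) = -β + 1 by ring]
    linarith

lemma gradSq_mul_le {β N : ℝ} (hβ : β < -(1 / 2)) {Ω : Set (ℝ × ℝ)} {f : ℝ × ℝ → ℝ}
    (hb : BddAbove (wFn β f '' Ω)) (hN : C1norm β Ω f ≤ N) {p : ℝ × ℝ} (hp : p ∈ Ω)
    (hp' : p ∈ HP) : gradSq f p * p.1 ≤ N ^ 2 * domFn β p := by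
  have h' : 0 < p.1 := hp'
  have hr := rr_pos hp'
  have hρ : p.1 ≤ rr p := abs_le_of_sq_le_sq' (by nlinarith [rr_sq p]) hr.le |>.2
  have h1 := (weighted_bounds hb hN hp).2
  have h2 : p.1 ≤ (rr p ^ 2 + 1) * (rr p)⁻¹ := by
    rw [← div_eq_mul_inv, le_div_iff₀ hr]; nlinarith
  calc gradSq f p * p.1
      ≤ N ^ 2 * (rr p ^ 2 + 1) ^ (β - 1) * ((rr p ^ 2 + 1) * (rr p)⁻¹) := by gcongr
    _ = N ^ 2 * ((rr p ^ 2 + 1) ^ β * (rr p)⁻¹) := by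
        rw [Real.rpow_sub_one (by positivity)]; field_simp
    _ ≤ _ := by gcongr; exact rpow_rr_le_domFn hβ hp'

lemma sq_mul_le {β N : ℝ} (hβ : β < -(1 / 2)) {f : ℝ × ℝ → ℝ}
    (hb : BddAbove (wFn β f '' HP)) (hN : C1norm β HP f ≤ N) {p : ℝ × ℝ}
    (hp' : p ∈ HP) : f p ^ 2 * (rr p ^ 2)⁻¹ * p.1 ≤ N ^ 2 * domFn β p := by
  have h' : 0 < p.1 := hp'
  have hr := rr_pos hp'
  have hρ : p.1 ≤ rr p := abs_le_of_sq_le_sq' (by nlinarith [rr_sq p]) hr.le |>.2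
  have h1 := (weighted_bounds hb hN hp').1
  calc f p ^ 2 * (rr p ^ 2)⁻¹ * p.1
      ≤ N ^ 2 * (rr p ^ 2 + 1) ^ β * (rr p ^ 2)⁻¹ * rr p := by gcongr
    _ = N ^ 2 * ((rr p ^ 2 + 1) ^ β * (rr p)⁻¹) := by field_simp
    _ ≤ _ := by gcongr; exact rpow_rr_le_domFn hβ hp'

lemma abs_le_of_C1norm {β N : ℝ} (hβ : β < -(1 / 2)) (hN0 : 0 ≤ N) {f : ℝ × ℝ → ℝ}
    (hb : BddAbove (wFn β f '' HP)) (hN : C1norm β HP f ≤ N) {p : ℝ × ℝ} (hp : p ∈ HP) :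
    |f p| ≤ N := by
  refine abs_le_of_sq_le_sq ((weighted_bounds hb hN hp).1.trans ?_) hN0
  have : (rr p ^ 2 + 1) ^ β ≤ 1 :=
    Real.rpow_le_one_of_one_le_of_nonpos (by nlinarith [sq_nonneg (rr p)]) (by linarith)
  nlinarith [sq_nonneg N]

/-- `∂y` vanishes on `{ρ ≤ ρ₀}`, boundary line included: the `C¹` regularity carries it over from `{ρ < ρ₀}`. -/
lemma gradSq_eq_zero {ρ₀ : ℝ} {y : ℝ × ℝ → ℝ} (hy : ContDiff ℝ 1 y)
    (hy0 : ∀ p : ℝ × ℝ, p.1 ≤ ρ₀ → y p = 0) {p : ℝ × ℝ} (hp : p.1 ≤ ρ₀) : gradSq y p = 0 := by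
  have hcont : Continuous (fderiv ℝ y) := hy.continuous_fderiv one_ne_zero
  have hcl : IsClosed {q : ℝ × ℝ | fderiv ℝ y q = 0} := isClosed_eq hcont continuous_const
  have hsub : {q : ℝ × ℝ | q.1 < ρ₀} ⊆ {q : ℝ × ℝ | fderiv ℝ y q = 0} := by
    intro q hq
    have he : y =ᶠ[nhds q] fun _ => 0 := by
      filter_upwards [(isOpen_lt continuous_fst continuous_const).mem_nhds hq] with x hx
      exact hy0 x (le_of_lt hx)
    exact he.fderiv_eq.trans (by simp)
  have hmem : p ∈ closure {q : ℝ × ℝ | q.1 < ρ₀} := by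
    have : {q : ℝ × ℝ | q.1 < ρ₀} = Set.Iio ρ₀ ×ˢ Set.univ := by ext; simp
    rw [this, closure_prod_eq, closure_Iio, closure_univ]
    exact ⟨hp, trivial⟩
  have h0 : fderiv ℝ y p = 0 := closure_minimal hsub hcl hmem
  simp [gradSq, pdR, pdZ, h0]

/-! ### Measurability and the quadratic expansion of the energy -/

lemma measurable_pdR (f : ℝ × ℝ → ℝ) : Measurable (pdR f) := measurable_fderiv_apply_const ℝ f _

lemma measurable_pdZ (f : ℝ × ℝ → ℝ) : Measurable (pdZ f) := measurable_fderiv_apply_const ℝ f _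

lemma measurable_gradSq (f : ℝ × ℝ → ℝ) : Measurable (gradSq f) :=
  ((measurable_pdR f).pow_const 2).add ((measurable_pdZ f).pow_const 2)

lemma measurable_gradDot (f g : ℝ × ℝ → ℝ) : Measurable (gradDot f g) :=
  ((measurable_pdR f).mul (measurable_pdR g)).add ((measurable_pdZ f).mul (measurable_pdZ g))

lemma measurable_v0 (J : ℝ) : Measurable (v0 J) := by
  unfold v0 X0 Sg sin2T cosT rt rr
  fun_prop

lemma gradDot_sq_le (f g : ℝ × ℝ → ℝ) (p : ℝ × ℝ) :
    gradDot f g p ^ 2 ≤ gradSq f p * gradSq g p := by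
  rw [gradDot, gradSq, gradSq]
  nlinarith [sq_nonneg (pdR f p * pdZ g p - pdZ f p * pdR g p)]

lemma gradSq_add_smul {f g : ℝ × ℝ → ℝ} {p : ℝ × ℝ} (hf : DifferentiableAt ℝ f p)
    (hg : DifferentiableAt ℝ g p) (t : ℝ) :
    gradSq (fun q => f q + t * g q) p =
      gradSq f p + 2 * t * gradDot f g p + t ^ 2 * gradSq g p := by
  have h : fderiv ℝ (fun q => f q + t * g q) p = fderiv ℝ f p + t • fderiv ℝ g p :=
    (hf.hasFDerivAt.add (hg.hasFDerivAt.const_mul t)).fderiv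
  simp only [gradSq, gradDot, pdR, pdZ, h, add_apply,
    smul_apply, smul_eq_mul]
  ring

/-! ### Uniform continuity of the second derivative -/

/-- For every ε > 0 there exists η(ε) > 0 such that for every φ ∈ 𝓑 with
‖φ‖_𝓑 < η(ε) and every t with 0 < t < 1, |i''_φ(t) − i''_φ(0)| ≤ ε ‖φ‖²_𝓗. -/
theorem iF_second_derivative_uniformly_continuous (J ρ₀ β : ℝ) (hJ : J ≠ 0)
    (hρ₀ : 0 < ρ₀) (hβ : β < -(1 / 2)) :
    ∀ ε > 0, ∃ η > 0, ∀ φ : Bsp ρ₀ β, Bnorm ρ₀ β φ < η →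
      ∀ t : ℝ, 0 < t → t < 1 →
        |iteratedDeriv 2 (iF J ρ₀ β φ) t - iteratedDeriv 2 (iF J ρ₀ β φ) 0| ≤
          ε * Hsq ρ₀ β φ := by
  intro ε hε
  refine ⟨min (1 / 2) (ε / (120 * 4608)), by positivity, fun φ hφ t ht0 ht1 => ?_⟩
  set N := Bnorm ρ₀ β φ with hNdef
  have hNa : C1norm β HP φ.a ≤ N := le_add_of_nonneg_right (C1norm_nonneg _ _ _)
  have hNy : C1norm β (Om ρ₀) φ.y ≤ N := le_add_of_nonneg_left (C1norm_nonneg _ _ _)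
  have hN0 : 0 ≤ N := (C1norm_nonneg _ _ _).trans hNa
  have hN2 : N ≤ 1 / 2 := (hφ.trans_le (min_le_left _ _)).le
  have hNε : N * (120 * 4608) ≤ ε := by
    have := (hφ.trans_le (min_le_right _ _)).le
    rwa [le_div_iff₀ (by norm_num)] at this
  have hHP : MeasurableSet HP := measurableSet_lt measurable_const measurable_fst
  have hae : ∀ᵐ p ∂(volume.restrict HP), p ∈ HP := ae_restrict_mem hHP
  have hOmHP : Om ρ₀ ⊆ HP := fun p hp => hρ₀.trans hp
  have hdom := (integrable_domFn hβ).integrableOn (s := HP)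
  -- `w` is the coefficient of `|∂Y|²` in the energy of `v₀`, with the volume factor `ρ` absorbed.
  set w : ℝ × ℝ → ℝ := fun p => (p.1 ^ 4)⁻¹ * Real.exp (-2 * v0 J p) * p.1 with hw
  have hwm : Measurable w := by
    have := measurable_v0 J
    fun_prop
  have hw0 : ∀ p ∈ HP, 0 ≤ w p := by
    intro p hp
    have h' : 0 < p.1 := hp
    simp only [hw]; positivity
  have hm1 := measurable_gradSq φ.a
  have hm2 := measurable_gradSq φ.y
  have hm3 := measurable_gradSq (v0 J)
  have hm4 := measurable_gradSq (Y0 J)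
  have hm5 := measurable_gradDot (v0 J) φ.a
  have hm6 := measurable_gradDot (Y0 J) φ.y
  have ham : Measurable φ.a := φ.ha.continuous.measurable
  have hrm : Measurable rr := by unfold rr; fun_prop
  have hCi : Integrable (fun p => gradSq φ.a p * p.1) (volume.restrict HP) := by
    refine (hdom.const_mul (N ^ 2)).mono' (by fun_prop) ?_
    filter_upwards [hae] with p hp
    have h' : 0 < p.1 := hp
    rw [Real.norm_eq_abs, abs_of_nonneg (mul_nonneg (gradSq_nonneg _ _) h'.le)]
    exact gradSq_mul_le hβ φ.hba hNa hp hp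
  have hai : Integrable (fun p => φ.a p ^ 2 * (rr p ^ 2)⁻¹ * p.1) (volume.restrict HP) := by
    refine (hdom.const_mul (N ^ 2)).mono' (by fun_prop) ?_
    filter_upwards [hae] with p hp
    have h' : 0 < p.1 := hp
    rw [Real.norm_eq_abs, abs_of_nonneg (by positivity)]
    exact sq_mul_le hβ φ.hba hNa hp
  have hbi : Integrable (fun p => gradSq φ.y p * (p.1 ^ 4)⁻¹ * p.1) (volume.restrict HP) := by
    refine (hdom.const_mul ((ρ₀ ^ 4)⁻¹ * N ^ 2)).mono' (by fun_prop) ?_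
    filter_upwards [hae] with p hp
    have h' : 0 < p.1 := hp
    have hg := gradSq_nonneg φ.y p
    rw [Real.norm_eq_abs, abs_of_nonneg (by positivity)]
    have hd0 : 0 ≤ domFn β p := by unfold domFn; positivity
    by_cases hpo : p.1 ≤ ρ₀
    · rw [gradSq_eq_zero φ.hy φ.hy0 hpo]
      simp only [zero_mul]; positivity
    · have hpo' : ρ₀ < p.1 := not_le.1 hpo
      calc gradSq φ.y p * (p.1 ^ 4)⁻¹ * p.1 = (p.1 ^ 4)⁻¹ * (gradSq φ.y p * p.1) := by ring
        _ ≤ (ρ₀ ^ 4)⁻¹ * (N ^ 2 * domFn β p) := by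
            refine mul_le_mul (by gcongr) (gradSq_mul_le hβ φ.hby hNy hpo' hp) (by positivity)
              (by positivity)
        _ = _ := by ring
  have hRle : ∀ p ∈ HP, gradSq φ.y p * w p ≤ 4 * (gradSq φ.y p * (p.1 ^ 4)⁻¹ * p.1) := by
    intro p hp
    have h' : 0 < p.1 := hp
    have hg := gradSq_nonneg φ.y p
    calc gradSq φ.y p * w p ≤ gradSq φ.y p * (4 * (p.1 ^ 4)⁻¹ * p.1) := by
          exact mul_le_mul_of_nonneg_left (mul_le_mul_of_nonneg_right (weight_le hp) h'.le) hg
      _ = _ := by ring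
  have hRi : Integrable (fun p => gradSq φ.y p * w p) (volume.restrict HP) := by
    refine (hbi.const_mul 4).mono' (by fun_prop) ?_
    filter_upwards [hae] with p hp
    rw [Real.norm_eq_abs, abs_of_nonneg (mul_nonneg (gradSq_nonneg _ _) (hw0 p hp))]
    exact hRle p hp
  -- `G` is `i_φ` without its constant prefactor.
  set G : ℝ → ℝ := fun s => ∫ p in HP,
    (gradSq (fun q => v0 J q + s * φ.a q) p + (p.1 ^ 4)⁻¹ *
      Real.exp (-2 * (v0 J p + s * φ.a p)) * gradSq (fun q => Y0 J q + s * φ.y q) p) * p.1 with hG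
  have hmain := abstract_bound (μ := volume.restrict HP) (α := φ.a) (G := G)
    (A := fun p => gradSq (v0 J) p * p.1) (B := fun p => gradDot (v0 J) φ.a p * p.1)
    (C := fun p => gradSq φ.a p * p.1)
    (P := fun p => gradSq (Y0 J) p * w p) (Q := fun p => gradDot (Y0 J) φ.y p * w p)
    (R := fun p => gradSq φ.y p * w p)
    (S := fun p => 4608 * (φ.a p ^ 2 * (rr p ^ 2)⁻¹ * p.1)
      + 4 * (gradSq φ.y p * (p.1 ^ 4)⁻¹ * p.1))
    hN0 hN2 ham
    (by filter_upwards [hae] with p hp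
        exact abs_le_of_C1norm hβ hN0 φ.hba hNa hp)
    (by fun_prop) (by fun_prop) (by fun_prop) (by fun_prop)
    (by filter_upwards [hae] with p hp
        exact mul_nonneg (gradSq_nonneg _ _) (le_of_lt hp))
    (by filter_upwards [hae] with p hp
        exact mul_nonneg (gradSq_nonneg _ _) (le_of_lt hp))
    (by filter_upwards [hae] with p hp
        exact mul_nonneg (gradSq_nonneg _ _) (hw0 p hp))
    (by filter_upwards [hae] with p hp
        exact mul_nonneg (gradSq_nonneg _ _) (hw0 p hp))
    (Filter.Eventually.of_forall fun p => by
        have := mul_le_mul_of_nonneg_right (gradDot_sq_le (v0 J) φ.a p) (sq_nonneg p.1)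
        linarith)
    (Filter.Eventually.of_forall fun p => by
        have := mul_le_mul_of_nonneg_right (gradDot_sq_le (Y0 J) φ.y p) (sq_nonneg (w p))
        linarith)
    hCi hRi ((hai.const_mul 4608).add (hbi.const_mul 4))
    (by filter_upwards [hae] with p hp
        have h' : 0 < p.1 := hp
        refine add_le_add ?_ (hRle p hp)
        calc φ.a p ^ 2 * (gradSq (Y0 J) p * w p) = φ.a p ^ 2 * p.1 *
              ((p.1 ^ 4)⁻¹ * Real.exp (-2 * v0 J p) * gradSq (Y0 J) p) := by
              simp only [hw]; ring
          _ ≤ φ.a p ^ 2 * p.1 * (4608 * (rr p ^ 2)⁻¹) := by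
              exact mul_le_mul_of_nonneg_left (energy_Y0_le hJ hp) (by positivity)
          _ = _ := by ring)
    (fun s => by
      refine setIntegral_congr_fun hHP fun p hp => ?_
      have hda := (φ.ha.differentiable one_ne_zero) p
      have hdy := (φ.hy.differentiable one_ne_zero) p
      simp only [hw]
      rw [gradSq_add_smul (differentiableAt_v0 hp) hda,
        gradSq_add_smul (differentiableAt_Y0 hp) hdy,
        show -2 * (v0 J p + s * φ.a p) = -2 * v0 J p + -2 * s * φ.a p by ring, Real.exp_add]
      ring)
    ht0 ht1
  rw [integral_add (hai.const_mul 4608) (hbi.const_mul 4), integral_const_mul,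
    integral_const_mul] at hmain
  set Ia := ∫ p in HP, φ.a p ^ 2 * (rr p ^ 2)⁻¹ * p.1 with hIa
  set Ib := ∫ p in HP, gradSq φ.y p * (p.1 ^ 4)⁻¹ * p.1 with hIb
  -- `∂y = 0` on `{ρ ≤ ρ₀}`, so the integral over the half-plane is the one in the `H₂` norm.
  have hIbOm : Ib = ∫ p in Om ρ₀, gradSq φ.y p * (p.1 ^ 4)⁻¹ * p.1 := by
    refine setIntegral_eq_of_subset_of_forall_sdiff_eq_zero hHP hOmHP fun p hp => ?_
    rw [gradSq_eq_zero φ.hy φ.hy0 (not_lt.1 hp.2), zero_mul, zero_mul]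
  have hOm : MeasurableSet (Om ρ₀) := measurableSet_lt measurable_const measurable_fst
  have hIa0 : 0 ≤ Ia := setIntegral_nonneg hHP fun p hp => by
    have h' : 0 < p.1 := hp
    positivity
  have hIb0 : 0 ≤ Ib := setIntegral_nonneg hHP fun p hp => by
    have h' : 0 < p.1 := hp
    have := gradSq_nonneg φ.y p
    positivity
  have hI1 : 0 ≤ ∫ p in HP, gradSq φ.a p * p.1 := setIntegral_nonneg hHP fun p hp =>
    mul_nonneg (gradSq_nonneg _ _) (le_of_lt hp)
  have hI2 : 0 ≤ ∫ p in Om ρ₀, φ.y p ^ 2 * (p.1 ^ 6)⁻¹ * p.1 :=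
    setIntegral_nonneg hOm fun p hp => by
      have h' : 0 < p.1 := hOmHP hp
      positivity
  have hH : 2 * π * (Ia + Ib) ≤ Hsq ρ₀ β φ := by
    rw [Hsq, H1sq, H2sq, intR3, intR3, intOm, intOm, ← hIbOm, ← hIa]
    have := mul_nonneg Real.two_pi_pos.le hI1
    have := mul_nonneg Real.two_pi_pos.le hI2
    linarith
  have hiF : iF J ρ₀ β φ = fun s => (1 / (32 * π) * (2 * π)) * G s := by
    funext s
    rw [iF, MF, intR3]
    exact (mul_assoc _ _ _).symm
  have hdd : ∀ s, iteratedDeriv 2 (iF J ρ₀ β φ) s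
      = (1 / (32 * π) * (2 * π)) * deriv (deriv G) s := by
    intro s
    rw [iteratedDeriv_succ, iteratedDeriv_one, hiF, deriv_const_mul_field',
      deriv_const_mul_field]
  have hπ := Real.pi_pos
  rw [hdd, hdd, ← mul_sub, abs_mul, abs_of_pos (by positivity)]
  have hsmall : 1 / (32 * π) ≤ 1 := by
    rw [div_le_one (by positivity)]; linarith [Real.pi_gt_three]
  have hH0 : 0 ≤ 2 * π * (Ia + Ib) := by positivity
  calc 1 / (32 * π) * (2 * π) * |deriv (deriv G) t - deriv (deriv G) 0|
      ≤ 1 / (32 * π) * (2 * π) * (120 * N * (4608 * (Ia + Ib))) := by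
        gcongr
        refine hmain.trans ?_
        gcongr
        linarith
    _ = 1 / (32 * π) * ((N * (120 * 4608)) * (2 * π * (Ia + Ib))) := by ring
    _ ≤ 1 * ((N * (120 * 4608)) * (2 * π * (Ia + Ib))) := by gcongr
    _ ≤ ε * Hsq ρ₀ β φ := by
        rw [one_mul]
        gcongr
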